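/- arXiv:2304.14895 — 3 statements merged into one kernel-verified Lean document; each statement's English description precedes it below -/
import Mathlib

section
/- If ζ and ε are independent real random variables, ζ is Gaussian with mean 0 and variance 1, ε has mean 0 and nonzero variance, and E(ζ | ζ + ε) = c(ζ + ε) almost surely for some constant c ∉ {0,1}, then the characteristic function of ε satisfies φ'(t) + (c⁻¹ - 1) t φ(t) = 0 for all t, and hence ε is Gaussian. -/
open MeasureTheory ProbabilityTheory Complex

lemma aux_hasDeriv {Ω : Type*} [MeasurableSpace Ω] (μ : Measure Ω) [IsProbabilityMeasure μ]
    (X : Ω → ℝ) (hX : Measurable X) (hi : Integrable X μ) (t : ℝ) :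
    HasDerivAt (charFun (μ.map X)) (I * ∫ ω, (X ω : ℂ) * cexp (t * X ω * I) ∂μ) t := by
  have : IsProbabilityMeasure (μ.map X) := Measure.isProbabilityMeasure_map hX.aemeasurable
  have hm : MemLp id ((1 : ℕ) : ENNReal) (μ.map X) := by
    rw [Nat.cast_one, memLp_one_iff_integrable]
    exact (integrable_map_measure (by fun_prop) hX.aemeasurable).2 hi
  have hd : DifferentiableAt ℝ (charFun (μ.map X)) t :=
    ((contDiff_charFun hm).differentiable (by simp)) t
  have h2 := iteratedDeriv_charFun (t := t) hm
  rw [iteratedDeriv_one, integral_map hX.aemeasurable (by fun_prop)] at h2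
  simp only [pow_one] at h2
  rw [← h2]
  exact hd.hasDerivAt

lemma aux_exp (a t : ℝ) : HasDerivAt (fun t : ℝ => cexp (a * (t : ℂ) ^ 2 / 2))
      (a * t * cexp (a * (t : ℂ) ^ 2 / 2)) t := by
  have h0 : HasDerivAt (fun t : ℝ => ((a * t ^ 2 / 2 : ℝ) : ℂ)) ((a * t : ℝ) : ℂ) t := by
    apply HasDerivAt.ofReal_comp
    have h := ((hasDerivAt_pow 2 t).const_mul a).div_const 2
    have e : a * (((2 : ℕ) : ℝ) * t ^ (2 - 1)) / 2 = a * t := by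
      norm_num; ring
    rw [e] at h
    exact h
  have := h0.cexp
  push_cast at this
  rw [mul_comm]
  exact this

theorem stmt0 {Ω : Type*} [MeasurableSpace Ω] (μ : Measure Ω) [IsProbabilityMeasure μ]
    (ζ ε : Ω → ℝ) (hmζ : Measurable ζ) (hmε : Measurable ε)
    (hindep : IndepFun ζ ε μ)
    (hζ : Measure.map ζ μ = gaussianReal 0 1)
    (hε0 : ∫ ω, ε ω ∂μ = 0) (hεvar : variance ε μ ≠ 0)
    (c : ℝ) (hc0 : c ≠ 0) (hc1 : c ≠ 1)
    (hlin : μ[ζ | MeasurableSpace.comap (fun ω => ζ ω + ε ω) inferInstance]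
      =ᵐ[μ] fun ω => c * (ζ ω + ε ω))
    (φ : ℝ → ℂ) (hφ : φ = fun t : ℝ => ∫ ω, Complex.exp (Complex.I * (t : ℂ) * (ε ω : ℂ)) ∂μ) :
    (∀ t : ℝ, deriv φ t + ((c⁻¹ - 1 : ℝ) : ℂ) * t * φ t = 0) ∧
      ∃ (m : ℝ) (v : NNReal), Measure.map ε μ = gaussianReal m v := by
  have hpε : IsProbabilityMeasure (μ.map ε) := Measure.isProbabilityMeasure_map hmε.aemeasurable
  have hφ' : φ = charFun (μ.map ε) := by
    rw [hφ]; funext t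
    rw [charFun_apply_real, integral_map hmε.aemeasurable (by fun_prop)]
    congr 1; funext ω; congr 1; ring
  have hiζ : Integrable ζ μ := by
    have h : Integrable id (μ.map ζ) := by
      rw [hζ, ← memLp_one_iff_integrable]
      exact memLp_id_gaussianReal 1
    exact (integrable_map_measure (by fun_prop) hmζ.aemeasurable).1 h
  have hS : Measurable (fun ω => ζ ω + ε ω) := hmζ.add hmε
  have hiS : Integrable (fun ω => ζ ω + ε ω) μ := by
    have h : Integrable (fun ω => c * (ζ ω + ε ω)) μ :=
      integrable_condExp.congr hlin
    simpa [hc0] using h.const_mul c⁻¹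
  have hiε : Integrable ε μ := by
    refine (hiS.sub hiζ).congr (ae_of_all _ fun ω => ?_)
    simp
  have hle : MeasurableSpace.comap (fun ω => ζ ω + ε ω) inferInstance ≤ ‹MeasurableSpace Ω› :=
    hS.comap_le
  have hbd (X : Ω → ℝ) (hX : Integrable X μ) (t : ℝ) :
      Integrable (fun ω => cexp (t * ((ζ ω + ε ω : ℝ) : ℂ) * I) * (X ω : ℂ)) μ := by
    refine (hX.ofReal (𝕜 := ℂ)).bdd_mul (c := 1) (by fun_prop) (ae_of_all _ fun ω => ?_)
    rw [← ofReal_mul, norm_exp_ofReal_mul_I]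
  -- key identity
  have key (t : ℝ) : ∫ ω, cexp (t * ((ζ ω + ε ω : ℝ) : ℂ) * I) * (ζ ω : ℂ) ∂μ
      = c * ∫ ω, ((ζ ω + ε ω : ℝ) : ℂ) * cexp (t * ((ζ ω + ε ω : ℝ) : ℂ) * I) ∂μ := by
    have h := condExp_bilin_of_stronglyMeasurable_left (μ := μ)
      (m := MeasurableSpace.comap (fun ω => ζ ω + ε ω) inferInstance)
      ((ContinuousLinearMap.lsmul ℝ ℝ : ℝ →L[ℝ] ℂ →L[ℝ] ℂ).flip)
      (f := fun ω => cexp (t * ((ζ ω + ε ω : ℝ) : ℂ) * I)) (g := ζ) ?_ ?_ hiζ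
    · rw [← integral_const_mul]
      have h1 := integral_condExp (μ := μ) hle
        (f := fun ω => cexp (t * ((ζ ω + ε ω : ℝ) : ℂ) * I) * (ζ ω : ℂ))
      rw [← h1]
      have e : (fun ω => cexp (t * ((ζ ω + ε ω : ℝ) : ℂ) * I) * (ζ ω : ℂ)) =
        (fun ω => ((ContinuousLinearMap.lsmul ℝ ℝ : ℝ →L[ℝ] ℂ →L[ℝ] ℂ).flip)
          (cexp (t * ((ζ ω + ε ω : ℝ) : ℂ) * I)) (ζ ω)) := by
        funext ω; simp [mul_comm]
      rw [e]
      refine integral_congr_ae ?_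
      filter_upwards [h, hlin] with ω h1 h2
      rw [h1, h2]
      simp
      ring
    · have : Measurable (fun x : ℝ => cexp (t * (x : ℂ) * I)) := by fun_prop
      exact (this.comp (comap_measurable _)).stronglyMeasurable
    · refine (hbd ζ hiζ t).congr (ae_of_all _ fun ω => ?_)
      simp [mul_comm]
  have hprod (t : ℝ) : ∫ ω, cexp (t * ((ζ ω + ε ω : ℝ) : ℂ) * I) * (ζ ω : ℂ) ∂μ
      = (∫ ω, (ζ ω : ℂ) * cexp (t * ζ ω * I) ∂μ) * φ t := by
    rw [hφ]
    have := hindep.integral_fun_comp_mul_comp (f := fun x : ℝ => (x : ℂ) * cexp (t * x * I))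
      (g := fun x : ℝ => cexp (I * t * x)) hmζ.aemeasurable hmε.aemeasurable
      (by fun_prop) (by fun_prop)
    rw [← this]
    congr 1; funext ω
    rw [mul_assoc (ζ ω : ℂ), ← Complex.exp_add, mul_comm]
    congr 2; push_cast; ring
  have hψ (t : ℝ) : HasDerivAt (charFun (μ.map ζ)) (-t * charFun (μ.map ζ) t) t := by
    have e : charFun (μ.map ζ) = fun t : ℝ => cexp (- (t : ℂ) ^ 2 / 2) := by
      rw [hζ]; funext t; rw [charFun_gaussianReal]; congr 1; simp; ring
    rw [e]
    convert aux_exp (-1) t using 1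
    · funext t; congr 1; push_cast; ring
    · have e2 : (-(t : ℂ) ^ 2 / 2) = ((-1 : ℝ) : ℂ) * (t : ℂ) ^ 2 / 2 := by push_cast; ring
      beta_reduce; rw [e2]; push_cast; ring
  have hψ0 (t : ℝ) : charFun (μ.map ζ) t ≠ 0 := by
    rw [hζ, charFun_gaussianReal]; exact Complex.exp_ne_zero _
  have hφd (t : ℝ) : HasDerivAt φ (deriv φ t) t := by
    rw [hφ']; exact (aux_hasDeriv μ ε hmε hiε t).differentiableAt.hasDerivAt
  have ode (t : ℝ) : deriv φ t + ((c⁻¹ - 1 : ℝ) : ℂ) * t * φ t = 0 := by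
    have h1 := (aux_hasDeriv μ ζ hmζ hiζ t).unique (hψ t)
    have h2 := aux_hasDeriv μ _ hS hiS t
    rw [hindep.charFun_map_fun_add_eq_mul hmζ.aemeasurable hmε.aemeasurable, ← hφ'] at h2
    have h3 := h2.unique ((hψ t).mul (hφd t))
    have h4 := key t
    rw [hprod] at h4
    have h5 : -(t : ℂ) * charFun (μ.map ζ) t * φ t =
        c * (-(t : ℂ) * charFun (μ.map ζ) t * φ t + charFun (μ.map ζ) t * deriv φ t) := by
      rw [← h3, ← h1]
      linear_combination I * h4
    have hc0' : (c : ℂ) ≠ 0 := by exact_mod_cast hc0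
    have h6 := hψ0 t
    apply mul_left_cancel₀ (mul_ne_zero hc0' h6)
    push_cast
    field_simp
    first
      | linear_combination -h5
      | (apply mul_left_cancel₀ h6; linear_combination -h5)
  refine ⟨ode, ?_⟩
  set a : ℝ := c⁻¹ - 1 with ha
  have hφ0 : φ 0 = 1 := by rw [hφ']; simp
  have hE (t : ℝ) : HasDerivAt (fun t : ℝ => cexp (a * (t : ℂ) ^ 2 / 2))
      (a * t * cexp (a * (t : ℂ) ^ 2 / 2)) t := aux_exp a t
  have hsol (t : ℝ) : φ t = cexp (-(a * (t : ℂ) ^ 2 / 2)) := by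
    have hd (t : ℝ) : HasDerivAt (fun t : ℝ => φ t * cexp (a * (t : ℂ) ^ 2 / 2)) 0 t := by
      have e : deriv φ t * cexp (a * (t : ℂ) ^ 2 / 2)
          + φ t * (a * t * cexp (a * (t : ℂ) ^ 2 / 2)) = 0 := by
        linear_combination (cexp (a * (t : ℂ) ^ 2 / 2)) * ode t
      rw [← e]
      exact (hφd t).mul (hE t)
    have := is_const_of_deriv_eq_zero (fun t => (hd t).differentiableAt)
      (fun t => (hd t).deriv) t 0
    simp only [hφ0] at this
    rw [Complex.exp_neg]
    refine eq_inv_of_mul_eq_one_left ?_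
    rw [this]; simp
  have ha0 : 0 ≤ a := by
    have h := norm_charFun_le_one (μ := μ.map ε) (1 : ℝ)
    rw [← hφ', hsol, Complex.norm_exp, Real.exp_le_one_iff] at h
    have e : (-((a : ℂ) * ((1 : ℝ) : ℂ) ^ 2 / 2)) = ((-(a / 2) : ℝ) : ℂ) := by push_cast; ring
    rw [e, ofReal_re] at h
    linarith
  refine ⟨0, a.toNNReal, Measure.ext_of_charFun ?_⟩
  funext t
  rw [← hφ', hsol, charFun_gaussianReal]
  congr 1
  simp [Real.coe_toNNReal a ha0]
end

section
/- If ζ and ε are independent real random variables with ζ Gaussian N(0,1) and ε having nonzero variance, and the conditional expectation E(ζ | ζ + ε) is almost surely a linear function c·(ζ+ε) of ζ+ε, then ε is Gaussian. -/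
open MeasureTheory ProbabilityTheory

lemma aux_norm (t x : ℝ) : ‖Complex.exp (t * x * Complex.I)‖ = 1 := by
  have := Complex.norm_exp_ofReal_mul_I (t * x)
  push_cast at this
  exact this

lemma aux_deriv {Ω : Type*} [MeasurableSpace Ω] (μ : Measure Ω) [IsProbabilityMeasure μ]
    (X : Ω → ℝ) (hX : Measurable X) (hi : Integrable X μ) (t : ℝ) :
    HasDerivAt (fun t : ℝ => ∫ ω, Complex.exp (t * X ω * Complex.I) ∂μ)
      (Complex.I * ∫ ω, X ω * Complex.exp (t * X ω * Complex.I) ∂μ) t := by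
  have h := hasDerivAt_integral_of_dominated_loc_of_deriv_le (μ := μ) (𝕜 := ℝ)
    (F := fun (t : ℝ) ω => Complex.exp (t * X ω * Complex.I))
    (F' := fun (t : ℝ) ω => Complex.I * (X ω * Complex.exp (t * X ω * Complex.I)))
    (x₀ := t) (s := Set.univ) (bound := fun ω => |X ω|) Filter.univ_mem
    (Filter.Eventually.of_forall fun t => by
      apply Measurable.aestronglyMeasurable; fun_prop)
    (by
      refine Integrable.of_bound (C := 1) ?_ ?_
      · apply Measurable.aestronglyMeasurable; fun_prop
      · exact Filter.Eventually.of_forall fun ω => (aux_norm _ _).le)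
    (by apply Measurable.aestronglyMeasurable; fun_prop)
    (Filter.Eventually.of_forall fun ω t _ => by
      simp [aux_norm])
    hi.abs
    (Filter.Eventually.of_forall fun ω t _ => by
      have h1 : HasDerivAt (fun t : ℝ => (t : ℂ) * X ω * Complex.I) (1 * X ω * Complex.I) t :=
        ((HasDerivAt.ofReal_comp (hasDerivAt_id t)).mul_const _).mul_const _
      refine h1.cexp.congr_deriv ?_
      ring)
  refine h.2.congr_deriv ?_
  rw [integral_const_mul]

lemma aux_gauss (t : ℝ) :
    ∫ x : ℝ, x * Complex.exp (t * x * Complex.I) ∂(gaussianReal 0 1)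
      = Complex.I * t * Complex.exp (-t ^ 2 / 2) := by
  have h := aux_deriv (gaussianReal 0 1) (fun x : ℝ => x) measurable_id
    ((memLp_id_gaussianReal 1).integrable le_rfl) t
  have h2 : (fun t : ℝ => ∫ x : ℝ, Complex.exp (t * x * Complex.I) ∂(gaussianReal 0 1))
      = fun t : ℝ => Complex.exp (-(t : ℂ) ^ 2 / 2) := by
    ext t
    rw [← charFun_apply_real, charFun_gaussianReal]
    congr 1
    simp
    ring
  rw [h2] at h
  have h3 : HasDerivAt (fun t : ℝ => Complex.exp (-(t : ℂ) ^ 2 / 2))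
      (Complex.exp (-(t : ℂ) ^ 2 / 2) * (-t)) t := by
    have h1 : HasDerivAt (fun t : ℝ => -(t : ℂ) ^ 2 / 2) (-t : ℂ) t := by
      have := (((HasDerivAt.ofReal_comp (hasDerivAt_id t)).pow 2).neg).div_const (2 : ℂ)
      refine this.congr_deriv ?_
      simp
      ring
    exact h1.cexp
  have h4 := h.unique h3
  have : Complex.I * (Complex.I * ∫ x : ℝ, x * Complex.exp (t * x * Complex.I) ∂(gaussianReal 0 1))
      = Complex.I * (Complex.exp (-(t : ℂ) ^ 2 / 2) * (-t)) := by rw [h4]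
  rw [← mul_assoc, Complex.I_mul_I] at this
  linear_combination -this

theorem stmt1 {Ω : Type*} [MeasurableSpace Ω] (μ : Measure Ω) [IsProbabilityMeasure μ]
    (ζ ε : Ω → ℝ) (hmζ : Measurable ζ) (hmε : Measurable ε)
    (hindep : IndepFun ζ ε μ)
    (hζ : Measure.map ζ μ = gaussianReal 0 1)
    (hεvar : variance ε μ ≠ 0)
    (c : ℝ)
    (hlin : μ[ζ | MeasurableSpace.comap (fun ω => ζ ω + ε ω) inferInstance]
      =ᵐ[μ] fun ω => c * (ζ ω + ε ω)) :
    ∃ (m : ℝ) (v : NNReal), Measure.map ε μ = gaussianReal m v := by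
  have hiζ : Integrable ζ μ := by
    have h : Integrable (fun x : ℝ => x) (Measure.map ζ μ) := by
      rw [hζ]; exact (memLp_id_gaussianReal 1).integrable le_rfl
    exact (integrable_map_measure measurable_id.aestronglyMeasurable hmζ.aemeasurable).1 h
  set S : Ω → ℝ := fun ω => ζ ω + ε ω with hS
  have hmS : Measurable S := hmζ.add hmε
  set φ : ℝ → ℂ := fun t => ∫ ω, Complex.exp (t * ε ω * Complex.I) ∂μ with hφ
  set ψ : ℝ → ℂ := fun t => ∫ ω, Complex.exp (t * S ω * Complex.I) ∂μ with hψ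
  have hφ' : ∀ t, charFun (Measure.map ε μ) t = φ t := by
    intro t
    rw [charFun_apply_real, integral_map hmε.aemeasurable]
    apply Measurable.aestronglyMeasurable; fun_prop
  have hψ' : ∀ t, charFun (Measure.map S μ) t = ψ t := by
    intro t
    rw [charFun_apply_real, integral_map hmS.aemeasurable]
    apply Measurable.aestronglyMeasurable; fun_prop
  have hprod : ∀ t : ℝ, ψ t = Complex.exp (-t ^ 2 / 2) * φ t := by
    intro t
    rw [← hφ', ← hψ', hindep.charFun_map_fun_add_eq_mul hmζ.aemeasurable hmε.aemeasurable, hζ]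
    simp only [Pi.mul_apply, charFun_gaussianReal]
    congr 2
    simp
    ring
  have hle : MeasurableSpace.comap S inferInstance ≤ (inferInstance : MeasurableSpace Ω) :=
    hmS.comap_le
  have hSm : Measurable[MeasurableSpace.comap S inferInstance] S := comap_measurable S
  -- left side
  have hL : ∀ t : ℝ, ∫ ω, (ζ ω : ℂ) * Complex.exp (t * S ω * Complex.I) ∂μ
      = Complex.I * t * ψ t := by
    intro t
    have h := hindep.integral_fun_comp_mul_comp (f := fun x : ℝ => (x : ℂ) * Complex.exp (t * x * Complex.I))
      (g := fun x : ℝ => Complex.exp (t * x * Complex.I)) hmζ.aemeasurable hmε.aemeasurable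
      (by apply Measurable.aestronglyMeasurable; fun_prop)
      (by apply Measurable.aestronglyMeasurable; fun_prop)
    have h2 := aux_gauss t
    rw [← hζ, integral_map hmζ.aemeasurable
      (by apply Measurable.aestronglyMeasurable; fun_prop)] at h2
    rw [h2] at h
    rw [hprod, ← mul_assoc, ← h]
    refine integral_congr_ae (Filter.Eventually.of_forall fun ω => ?_)
    simp only [hS]
    rw [mul_assoc (ζ ω : ℂ), ← Complex.exp_add]
    congr 2
    push_cast
    ring
  have hR : ∀ t : ℝ, ∫ ω, (ζ ω : ℂ) * Complex.exp (t * S ω * Complex.I) ∂μ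
      = c * ∫ ω, (S ω : ℂ) * Complex.exp (t * S ω * Complex.I) ∂μ := by
    intro t
    have h := condExp_stronglyMeasurable_bilin_of_bound (μ := μ)
      (ContinuousLinearMap.lsmul ℝ ℝ : ℝ →L[ℝ] ℂ →L[ℝ] ℂ).flip hle
      (f := fun ω => Complex.exp (t * S ω * Complex.I)) (g := ζ)
      (by
        have hm : Measurable (fun x : ℝ => Complex.exp (t * x * Complex.I)) := by fun_prop
        exact (hm.comp hSm).stronglyMeasurable) hiζ 1
      (Filter.Eventually.of_forall fun ω => (aux_norm _ _).le)
    have h2 := integral_congr_ae h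
    rw [integral_condExp hle] at h2
    simp only [ContinuousLinearMap.flip_apply, ContinuousLinearMap.lsmul_apply,
      Complex.real_smul] at h2
    rw [h2, ← integral_const_mul]
    refine integral_congr_ae ?_
    filter_upwards [hlin] with ω hω
    rw [hω, show ζ ω + ε ω = S ω from rfl]
    push_cast
    ring
  have hψ0 : ψ 0 = 1 := by simp [hψ]
  have hφ0 : φ 0 = 1 := by simp [hφ]
  have hc : c ≠ 0 := by
    rintro rfl
    have hz : ∀ t : ℝ, t ≠ 0 → ψ t = 0 := by
      intro t ht
      have := (hL t).symm.trans (hR t)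
      simpa [ht] using this
    have hcont : Continuous ψ := by
      refine continuous_of_dominated (bound := fun _ => 1) ?_ ?_ (integrable_const _) ?_
      · intro t; apply Measurable.aestronglyMeasurable; fun_prop
      · exact fun t => Filter.Eventually.of_forall fun ω => (aux_norm _ _).le
      · exact Filter.Eventually.of_forall fun ω => by fun_prop
    have h0 : ψ = fun _ => 0 :=
      hcont.ext_on (dense_compl_singleton (0 : ℝ)) continuous_const (fun t ht => hz t ht)
    rw [h0] at hψ0
    simp at hψ0
  have hiS : Integrable S μ := by
    have h : Integrable (fun ω => c * S ω) μ := integrable_condExp.congr hlin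
    exact (integrable_const_mul_iff (isUnit_iff_ne_zero.2 hc) _).1 h
  have hcC : (c : ℂ) ≠ 0 := by exact_mod_cast hc
  have hd : ∀ t : ℝ, HasDerivAt ψ (-(t / c) * ψ t) t := by
    intro t
    refine (aux_deriv μ S hmS hiS t).congr_deriv ?_
    have := (hL t).symm.trans (hR t)
    have h2 : ∫ ω, (S ω : ℂ) * Complex.exp (t * S ω * Complex.I) ∂μ
        = Complex.I * t * ψ t / c := by
      rw [this, mul_div_cancel_left₀ _ hcC]
    rw [h2]
    linear_combination (t * ψ t / c) * Complex.I_mul_I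
  have hsol : ∀ t : ℝ, ψ t = Complex.exp (-(t ^ 2 / (2 * c))) := by
    have hF : ∀ t : ℝ, HasDerivAt (fun t : ℝ => ψ t * Complex.exp ((t : ℂ) ^ 2 / (2 * c))) 0 t := by
      intro t
      have h1 : HasDerivAt (fun t : ℝ => (t : ℂ) ^ 2 / (2 * c)) (t / c : ℂ) t := by
        have := ((HasDerivAt.ofReal_comp (hasDerivAt_id t)).pow 2).div_const (2 * c : ℂ)
        refine this.congr_deriv ?_
        simp
        field_simp
      refine ((hd t).mul h1.cexp).congr_deriv ?_
      ring
    intro t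
    have := is_const_of_deriv_eq_zero (fun t => (hF t).differentiableAt) (fun t => (hF t).deriv) t 0
    simp only [hψ0] at this
    rw [Complex.exp_neg, eq_inv_of_mul_eq_one_left (this.trans (by simp))]
  have hφs : ∀ t : ℝ, φ t = Complex.exp (((-((1 / c - 1) * t ^ 2 / 2) : ℝ) : ℂ)) := by
    intro t
    have h := hprod t
    rw [hsol t] at h
    have h2 : φ t = Complex.exp (t ^ 2 / 2) * Complex.exp (-(t ^ 2 / (2 * c))) := by
      rw [h, ← mul_assoc, ← Complex.exp_add]
      ring_nf
      simp
    rw [h2, ← Complex.exp_add]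
    congr 1
    push_cast
    field_simp
    ring
  have hv : 0 ≤ 1 / c - 1 := by
    have h1 : ‖φ 1‖ ≤ 1 := by
      have := Measure.isProbabilityMeasure_map (μ := μ) hmε.aemeasurable
      rw [← hφ']
      exact norm_charFun_le_one _
    rw [hφs, ← Complex.ofReal_exp, Complex.norm_real, Real.norm_eq_abs, Real.abs_exp,
      Real.exp_le_one_iff] at h1
    linarith
  obtain ⟨v, hv'⟩ : ∃ v : NNReal, (v : ℝ) = 1 / c - 1 := ⟨⟨_, hv⟩, rfl⟩
  refine ⟨0, v, ?_⟩
  have := Measure.isProbabilityMeasure_map (μ := μ) hmε.aemeasurable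
  apply Measure.ext_of_charFun
  ext t
  rw [hφ', hφs, charFun_gaussianReal, ← hv']
  congr 1
  simp
end

section
/- Under the linear structural model A = γZ + λᵀU + ε_A and Y = αA + βZ + sᵀU + ε_Y, with (Z,U) centered Gaussian (Var(Z)=1, Var(U)=Iₜ, Cov(Z,U)=ξᵀ), ε_A ⊥ (Z,U) non-Gaussian with nonzero variance, E(ε_Y | A)=0, and Cov(Z,A) = γ + ξᵀλ ≠ 0, the conditional expectation satisfies E(Y | A) = αA + h·E(Z | A) almost surely, where h = β + sᵀ(γξ + λ)/(γ + ξᵀλ). -/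
open MeasureTheory ProbabilityTheory

lemma aux_second {Ω : Type*} [MeasurableSpace Ω] (μ : Measure Ω)
    {t : ℕ} (Z : Ω → ℝ) (U : Ω → Fin t → ℝ)
    (hZ : MemLp Z 2 μ) (hU : ∀ i, MemLp (fun ω => U ω i) 2 μ)
    (ξ : Fin t → ℝ)
    (hvarZ : ∫ ω, Z ω * Z ω ∂μ = 1)
    (hvarU : ∀ i j, ∫ ω, U ω i * U ω j ∂μ = if i = j then 1 else 0)
    (hcov : ∀ i, ∫ ω, Z ω * U ω i ∂μ = ξ i) (a c : ℝ) (b d : Fin t → ℝ) :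
    ∫ ω, (a * Z ω + ∑ i, b i * U ω i) * (c * Z ω + ∑ i, d i * U ω i) ∂μ
      = a * c + ∑ i, (a * d i * ξ i) + ∑ i, (c * b i * ξ i) + ∑ i, b i * d i := by
  have e : ∀ ω, (a * Z ω + ∑ i, b i * U ω i) * (c * Z ω + ∑ i, d i * U ω i)
      = (a * c) * (Z ω * Z ω) + ∑ i, (a * d i) * (Z ω * U ω i)
        + ∑ i, (c * b i) * (Z ω * U ω i)
        + ∑ i, ∑ j, (b i * d j) * (U ω i * U ω j) := by
    intro ω
    have h1 : ∑ i, (a * d i) * (Z ω * U ω i) = a * Z ω * ∑ i, d i * U ω i := by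
      rw [Finset.mul_sum]; exact Finset.sum_congr rfl fun i _ => by ring
    have h2 : ∑ i, (c * b i) * (Z ω * U ω i) = c * Z ω * ∑ i, b i * U ω i := by
      rw [Finset.mul_sum]; exact Finset.sum_congr rfl fun i _ => by ring
    have h3 : ∑ i, ∑ j, (b i * d j) * (U ω i * U ω j)
        = (∑ i, b i * U ω i) * ∑ i, d i * U ω i := by
      rw [Finset.sum_mul_sum]
      exact Finset.sum_congr rfl fun i _ => Finset.sum_congr rfl fun j _ => by ring
    rw [h1, h2, h3]; ring
  have i1 : Integrable (fun ω => (a * c) * (Z ω * Z ω)) μ :=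
    (hZ.integrable_mul hZ).const_mul _
  have i2 : ∀ (k : ℝ) i, Integrable (fun ω => k * (Z ω * U ω i)) μ := fun k i =>
    (hZ.integrable_mul (hU i)).const_mul _
  have i3 : ∀ (k : ℝ) i j, Integrable (fun ω => k * (U ω i * U ω j)) μ := fun k i j =>
    ((hU i).integrable_mul (hU j)).const_mul _
  have j1 : Integrable (fun ω => ∑ i, (a * d i) * (Z ω * U ω i)) μ :=
    integrable_finsetSum _ fun i _ => i2 _ i
  have j2 : Integrable (fun ω => ∑ i, (c * b i) * (Z ω * U ω i)) μ :=
    integrable_finsetSum _ fun i _ => i2 _ i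
  have j3 : ∀ i, Integrable (fun ω => ∑ j, (b i * d j) * (U ω i * U ω j)) μ := fun i =>
    integrable_finsetSum _ fun j _ => i3 _ i j
  have j4 : Integrable (fun ω => ∑ i, ∑ j, (b i * d j) * (U ω i * U ω j)) μ :=
    integrable_finsetSum _ fun i _ => j3 i
  simp_rw [e]
  have k1 : Integrable (fun ω => (a * c) * (Z ω * Z ω)
      + ∑ i, (a * d i) * (Z ω * U ω i)) μ := i1.add j1
  have k2 : Integrable (fun ω => (a * c) * (Z ω * Z ω)
      + ∑ i, (a * d i) * (Z ω * U ω i) + ∑ i, (c * b i) * (Z ω * U ω i)) μ := k1.add j2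
  rw [integral_add k2 j4, integral_add k1 j2, integral_add i1 j1,
    integral_finsetSum _ fun i _ => i2 _ i, integral_finsetSum _ fun i _ => i2 _ i,
    integral_finsetSum _ fun i _ => j3 i]
  simp_rw [integral_finsetSum _ fun j _ => i3 _ _ j, integral_const_mul, hvarZ, hvarU, hcov]
  simp

lemma aux_indep {Ω : Type*} [MeasurableSpace Ω] (μ : Measure Ω) [IsProbabilityMeasure μ]
    (D X E : Ω → ℝ) (hD : Measurable D) (hX : Measurable X) (hE : Measurable E)
    (h1 : IndepFun D X μ) (h2 : IndepFun (fun ω => (D ω, X ω)) E μ) :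
    IndepFun D (fun ω => X ω + E ω) μ := by
  have h3 : IndepFun X E μ := h2.comp (φ := Prod.snd) (ψ := id) measurable_snd measurable_id
  have h4 : IndepFun D (fun ω => (X ω, E ω)) μ := by
    rw [indepFun_iff_map_prod_eq_prod_map_map (by fun_prop) (by fun_prop)] at h1 h2 h3 ⊢
    rw [h3, ← Measure.prodAssoc_prod, ← h1, ← h2,
      Measure.map_map (MeasurableEquiv.measurable _) (by fun_prop)]
    rfl
  exact h4.comp (φ := id) (ψ := fun p : ℝ × ℝ => p.1 + p.2) measurable_id (by fun_prop)


/-- Under A = γZ + λᵀU + ε_A, Y = αA + βZ + sᵀU + ε_Y with (Z,U)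
centered Gaussian, ε_A ⊥ (Z,U) non-Gaussian with nonzero variance, E(ε_Y | A)=0,
and Cov(Z,A) = γ + ξᵀλ ≠ 0, one has E(Y | A) = αA + h·E(Z | A) a.s. where
h = β + sᵀ(γξ + λ)/(γ + ξᵀλ). -/
theorem stmt7 {Ω : Type*} [MeasurableSpace Ω] (μ : Measure Ω) [IsProbabilityMeasure μ]
    {t : ℕ} (Z : Ω → ℝ) (U : Ω → Fin t → ℝ) (εA εY : Ω → ℝ)
    (hmZ : Measurable Z) (hmU : Measurable U) (hmεA : Measurable εA)
    (hmεY : Measurable εY) (hεYint : Integrable εY μ)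
    (hGauss : ∀ (a : ℝ) (b : Fin t → ℝ), ∃ v : NNReal,
      Measure.map (fun ω => a * Z ω + ∑ i, b i * U ω i) μ = gaussianReal 0 v)
    (ξ : Fin t → ℝ)
    (hvarZ : ∫ ω, Z ω * Z ω ∂μ = 1)
    (hvarU : ∀ i j, ∫ ω, U ω i * U ω j ∂μ = if i = j then 1 else 0)
    (hcov : ∀ i, ∫ ω, Z ω * U ω i ∂μ = ξ i)
    (hindepA : IndepFun εA (fun ω => (Z ω, U ω)) μ)
    (hεvar : variance εA μ ≠ 0)
    (hεnonGauss : ¬ ∃ (m : ℝ) (v : NNReal), Measure.map εA μ = gaussianReal m v)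
    (α β γ : ℝ) (lam s : Fin t → ℝ)
    (hne : γ + ∑ i, ξ i * lam i ≠ 0)
    (A Y : Ω → ℝ)
    (hA : ∀ ω, A ω = γ * Z ω + (∑ i, lam i * U ω i) + εA ω)
    (hY : ∀ ω, Y ω = α * A ω + β * Z ω + (∑ i, s i * U ω i) + εY ω)
    (hεY : μ[εY | MeasurableSpace.comap A inferInstance] =ᵐ[μ] 0)
    (h : ℝ)
    (hh : h = β + (∑ i, s i * (γ * ξ i + lam i)) / (γ + ∑ i, ξ i * lam i)) :
    μ[Y | MeasurableSpace.comap A inferInstance]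
      =ᵐ[μ] fun ω => α * A ω +
        h * ((μ[Z | MeasurableSpace.comap A inferInstance]) ω) := by
  have hmUi : ∀ i, Measurable (fun ω => U ω i) := fun i => (measurable_pi_apply i).comp hmU
  have hmG : ∀ (a : ℝ) (b : Fin t → ℝ), Measurable (fun ω => a * Z ω + ∑ i, b i * U ω i) :=
    fun a b => (hmZ.const_mul a).add (Finset.measurable_sum _ fun i _ => (hmUi i).const_mul _)
  have hGL : ∀ (a : ℝ) (b : Fin t → ℝ),
      HasGaussianLaw (fun ω => a * Z ω + ∑ i, b i * U ω i) μ := by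
    intro a b
    obtain ⟨v, hv⟩ := hGauss a b
    exact ⟨by rw [hv]; infer_instance⟩
  have hmean : ∀ (a : ℝ) (b : Fin t → ℝ), ∫ ω, (a * Z ω + ∑ i, b i * U ω i) ∂μ = 0 := by
    intro a b
    obtain ⟨v, hv⟩ := hGauss a b
    have := integral_map (μ := μ) (hmG a b).aemeasurable (f := fun x : ℝ => x)
      (by fun_prop)
    rw [← this, hv, integral_id_gaussianReal]
  have hZ2 : MemLp Z 2 μ := by
    have := (hGL 1 0).memLp_two
    simpa using this
  have hU2 : ∀ i, MemLp (fun ω => U ω i) 2 μ := by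
    intro i
    have := (hGL 0 (Pi.single i 1)).memLp_two
    simpa [Pi.single_apply] using this
  have hE2 : MemLp εA 2 μ := memLp_two_of_variance_ne_zero hmεA.aestronglyMeasurable hεvar
  let D : Ω → ℝ := fun ω => (β - h) * Z ω + ∑ i, s i * U ω i
  let X : Ω → ℝ := fun ω => γ * Z ω + ∑ i, lam i * U ω i
  have hAe : A = fun ω => X ω + εA ω := funext hA
  have hmA : Measurable A := by rw [hAe]; exact (hmG _ _).add hmεA
  have hjoint : HasGaussianLaw (fun ω => (D ω, X ω)) μ := by
    refine ⟨isGaussian_of_isGaussian_map fun L => ?_⟩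
    rw [Measure.map_map (by fun_prop) ((hmG _ _).prodMk (hmG _ _))]
    have hL : (⇑L ∘ fun ω => (D ω, X ω)) = fun ω =>
        (L (1, 0) * (β - h) + L (0, 1) * γ) * Z ω
          + ∑ i, (L (1, 0) * s i + L (0, 1) * lam i) * U ω i := by
      funext ω
      have : (D ω, X ω) = D ω • ((1 : ℝ), (0 : ℝ)) + X ω • ((0 : ℝ), (1 : ℝ)) := by simp
      simp only [Function.comp_apply]
      rw [this, map_add, map_smul, map_smul]
      simp only [D, X, smul_eq_mul, add_mul, Finset.sum_add_distrib, Finset.sum_mul]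
      have e1 : ∀ k : ℝ, ∀ f : Fin t → ℝ,
          ∑ i, f i * U ω i * k = ∑ i, k * f i * U ω i := fun k f =>
        Finset.sum_congr rfl fun i _ => by ring
      rw [e1, e1]; ring
    rw [hL]
    exact (hGL _ _).isGaussian_map
  have hcovDX : cov[D, X; μ] = 0 := by
    rw [covariance_eq_sub (hGL _ _).memLp_two (hGL _ _).memLp_two]
    have m1 : ∫ ω, D ω ∂μ = 0 := hmean _ _
    have m2 : ∫ ω, (D * X) ω ∂μ = _ :=
      aux_second μ Z U hZ2 hU2 ξ hvarZ hvarU hcov (β - h) γ s lam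
    rw [m1, m2]
    have e1 : ∑ i, (β - h) * lam i * ξ i = (β - h) * ∑ i, ξ i * lam i := by
      rw [Finset.mul_sum]; exact Finset.sum_congr rfl fun i _ => by ring
    have e2 : ∑ i, s i * (γ * ξ i + lam i) = ∑ i, γ * s i * ξ i + ∑ i, s i * lam i := by
      rw [← Finset.sum_add_distrib]; exact Finset.sum_congr rfl fun i _ => by ring
    have e3 : (β - h) * (γ + ∑ i, ξ i * lam i) = - ∑ i, s i * (γ * ξ i + lam i) := by
      rw [hh]; field_simp; ring
    rw [e1]
    rw [e2] at e3
    linarith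
  have hDX : IndepFun D X μ := hjoint.indepFun_of_covariance_eq_zero hcovDX
  have hDXE : IndepFun (fun ω => (D ω, X ω)) εA μ := by
    have := hindepA.symm.comp (ψ := id)
      (φ := fun p : ℝ × (Fin t → ℝ) =>
        ((β - h) * p.1 + ∑ i, s i * p.2 i, γ * p.1 + ∑ i, lam i * p.2 i))
      (by fun_prop) measurable_id
    exact this
  have hDA : IndepFun D A μ := by
    rw [hAe]; exact aux_indep μ D X εA (hmG _ _) (hmG _ _) hmεA hDX hDXE
  have hle : MeasurableSpace.comap A inferInstance ≤ (inferInstance : MeasurableSpace Ω) :=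
    hmA.comap_le
  have hD0 : μ[D | MeasurableSpace.comap A inferInstance] =ᵐ[μ] fun _ => (0 : ℝ) := by
    have := condExp_indep_eq (μ := μ) (hmG (β - h) s).comap_le hle
      (comap_measurable D).stronglyMeasurable hDA
    refine this.trans ?_
    rw [show ∫ ω, D ω ∂μ = 0 from hmean _ _]
  have hZi : Integrable Z μ := hZ2.integrable (by norm_num)
  have hDi : Integrable D μ := (hGL _ _).memLp_two.integrable (by norm_num)
  have hAi : Integrable A μ := by
    rw [hAe]
    exact ((hGL _ _).memLp_two.integrable (by norm_num)).add (hE2.integrable (by norm_num))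
  have hYe : Y = (α • A + h • Z) + (D + εY) := by
    funext ω
    simp only [Pi.add_apply, Pi.smul_apply, smul_eq_mul, D, hY]
    ring
  have c1 : μ[α • A | MeasurableSpace.comap A inferInstance] = α • A :=
    condExp_of_stronglyMeasurable hle
      ((comap_measurable A).stronglyMeasurable.const_smul α) (hAi.smul α)
  have c2 := condExp_add ((hAi.smul α).add (hZi.smul h)) (hDi.add hεYint)
    (MeasurableSpace.comap A inferInstance)
  have c3 := condExp_add (hAi.smul α) (hZi.smul h) (MeasurableSpace.comap A inferInstance)
  have c4 := condExp_add hDi hεYint (MeasurableSpace.comap A inferInstance)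
  have c5 := condExp_smul (μ := μ) h Z (MeasurableSpace.comap A inferInstance)
  rw [hYe]
  filter_upwards [c2, c3, c4, c5, hD0, hεY] with ω d2 d3 d4 d5 d6 d7
  rw [d2, Pi.add_apply, d3, d4, Pi.add_apply, Pi.add_apply, c1, d5, d6, d7]
  simp
end
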